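/- arXiv:2106.03227 — 2 statements merged into one kernel-verified Lean document; each statement's English description precedes it below -/
import Mathlib

section
/- (Proposition B.3, part 1.) Assume p = q. Let 0 < δ < 1 satisfy √(log(1/δ)/(2 c_a n)) ≤ 0.1 ν. Then there exists a measurable set E of training configurations D_tr with P_(1)(E) ≥ 1 − 4δ such that for every D_tr ∈ E and every 0 < λ < 3 √(1.1 ν c_a n), the conditional probability P_(2)[ T̂_a > Ĉ + 4 λ √(1.1 ν/(c_a n)) ] ≤ 4 e^{−λ²/4}. -/
open MeasureTheory Real
open scoped BigOperators ENNReal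

/-- The asymmetric empirical MMD statistic `T̂_a` of kernel `K`, computed between the
training sample `dtr = (X₍₁₎, Y₍₁₎)` and the test sample `dte = (X₍₂₎, Y₍₂₎)`. -/
noncomputable def asymMMD {𝒳 : Type*} (K : 𝒳 → 𝒳 → ℝ) (n1X n1Y n2X n2Y : ℕ)
    (dtr : (Fin n1X → 𝒳) × (Fin n1Y → 𝒳))
    (dte : (Fin n2X → 𝒳) × (Fin n2Y → 𝒳)) : ℝ :=
  (1/((n2X:ℝ)*(n1X:ℝ))) * ∑ i, ∑ j, K (dte.1 i) (dtr.1 j)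
  - (1/((n2X:ℝ)*(n1Y:ℝ))) * ∑ i, ∑ j, K (dte.1 i) (dtr.2 j)
  - (1/((n2Y:ℝ)*(n1X:ℝ))) * ∑ i, ∑ j, K (dte.2 i) (dtr.1 j)
  + (1/((n2Y:ℝ)*(n1Y:ℝ))) * ∑ i, ∑ j, K (dte.2 i) (dtr.2 j)

/-- The exact NTK witness function `ĝ_NTK` built from the training sample
`dtr = (X₍₁₎, Y₍₁₎)`. -/
noncomputable def ntkWitness {𝒳 : Type*} (K : 𝒳 → 𝒳 → ℝ) (n1X n1Y : ℕ)
    (dtr : (Fin n1X → 𝒳) × (Fin n1Y → 𝒳)) (x : 𝒳) : ℝ :=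
  (1/(n1X:ℝ)) * ∑ j, K x (dtr.1 j) - (1/(n1Y:ℝ)) * ∑ j, K x (dtr.2 j)

/-- The conditional mean `Ĉ = ∫ ĝ_NTK d(p−q) = ∫ ĝ_NTK dp − ∫ ĝ_NTK dq`. -/
noncomputable def condMeanC {𝒳 : Type*} [MeasurableSpace 𝒳] (K : 𝒳 → 𝒳 → ℝ)
    (n1X n1Y : ℕ) (p q : Measure 𝒳)
    (dtr : (Fin n1X → 𝒳) × (Fin n1Y → 𝒳)) : ℝ :=
  (∫ x, ntkWitness K n1X n1Y dtr x ∂p) - ∫ x, ntkWitness K n1X n1Y dtr x ∂q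

/-!
Given the training sample `D`, `T̂_a` is a difference of empirical means of the fixed function
`ĝ = ntkWitness D`, which is bounded by `2`, and `Ĉ` is its expectation. By Jensen, the second
moment of `ĝ` under `μ ∈ {p, q}` is at most twice the sum of the averages, over the two training
samples, of the energy `z ↦ ∫ K(z, y)² dμ(y) ∈ [0, 1]`. Hoeffding's inequality keeps each of
these four averages below `1.1 ν` outside an event of probability `δ`, so that the second moments
are at most `4 · 1.1 ν` outside an event of probability `4 δ`. Chernoff's method, with
`exp x ≤ 1 + x + x²` for `|x| ≤ 1`, then gives a Bernstein bound for the test sample.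
-/

open ProbabilityTheory

section EmpiricalMean

variable {ι κ : Type*} [Fintype ι] [Fintype κ]

lemma abs_expect_le_of_forall_abs_le {f : ι → ℝ} {b : ℝ} (hb : 0 ≤ b) (hf : ∀ i, |f i| ≤ b) :
    |𝔼 i, f i| ≤ b := by
  cases isEmpty_or_nonempty ι
  · simpa
  · exact (Finset.abs_expect_le _ _).trans (Finset.expect_le Finset.univ_nonempty fun i _ ↦ hf i)

lemma sq_expect_le_expect_sq (f : ι → ℝ) : (𝔼 i, f i) ^ 2 ≤ 𝔼 i, f i ^ 2 := by
  simpa only [Fintype.expect_eq_sum_div_card] using! sum_div_card_sq_le_sum_sq_div_card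

variable {Ω : Type*} [MeasurableSpace Ω] {μ : Measure Ω}

lemma integral_expect {f : ι → Ω → ℝ} (hf : ∀ i, Integrable (f i) μ) :
    ∫ x, 𝔼 i, f i x ∂μ = 𝔼 i, ∫ x, f i x ∂μ := by
  simp only [Fintype.expect_eq_sum_div_card, integral_div, integral_finsetSum _ fun i _ ↦ hf i]

lemma integrable_expect {f : ι → Ω → ℝ} (hf : ∀ i, Integrable (f i) μ) :
    Integrable (fun x ↦ 𝔼 i, f i x) μ := by
  simp only [Fintype.expect_eq_sum_div_card]
  exact (integrable_finsetSum _ fun i _ ↦ hf i).div_const _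

lemma measurable_expect {f : ι → Ω → ℝ} (hf : ∀ i, Measurable (f i)) :
    Measurable fun x ↦ 𝔼 i, f i x := by
  simp only [Fintype.expect_eq_sum_div_card]
  fun_prop

lemma integral_sq_expect_sub_expect_le {f : ι → Ω → ℝ} {g : κ → Ω → ℝ}
    (hf : ∀ i, Integrable (fun x ↦ f i x ^ 2) μ) (hg : ∀ j, Integrable (fun x ↦ g j x ^ 2) μ) :
    ∫ x, (𝔼 i, f i x - 𝔼 j, g j x) ^ 2 ∂μ ≤
      2 * (𝔼 i, ∫ x, f i x ^ 2 ∂μ + 𝔼 j, ∫ x, g j x ^ 2 ∂μ) := by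
  have hpointwise (x : Ω) : (𝔼 i, f i x - 𝔼 j, g j x) ^ 2 ≤
      2 * (𝔼 i, f i x ^ 2 + 𝔼 j, g j x ^ 2) := by
    have hfx := sq_expect_le_expect_sq fun i ↦ f i x
    have hgx := sq_expect_le_expect_sq fun j ↦ g j x
    linarith [sq_nonneg (𝔼 i, f i x + 𝔼 j, g j x)]
  calc ∫ x, (𝔼 i, f i x - 𝔼 j, g j x) ^ 2 ∂μ
      ≤ ∫ x, 2 * (𝔼 i, f i x ^ 2 + 𝔼 j, g j x ^ 2) ∂μ :=
        integral_mono_of_nonneg (ae_of_all _ fun _ ↦ sq_nonneg _)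
          (((integrable_expect hf).add (integrable_expect hg)).const_mul 2)
          (ae_of_all _ hpointwise)
    _ = 2 * (𝔼 i, ∫ x, f i x ^ 2 ∂μ + 𝔼 j, ∫ x, g j x ^ 2 ∂μ) := by
        rw [integral_const_mul, integral_add (integrable_expect hf) (integrable_expect hg),
          integral_expect hf, integral_expect hg]

end EmpiricalMean

section Concentration

variable {ι κ α β : Type*} [Fintype ι] [Fintype κ] [MeasurableSpace α] [MeasurableSpace β]
  {μ : Measure α} {ρ : Measure β}

lemma integrable_exp_mul_of_abs_le [IsFiniteMeasure μ] {X : α → ℝ} {b : ℝ}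
    (hX : AEStronglyMeasurable X μ) (hb : ∀ᵐ x ∂μ, |X x| ≤ b) (t : ℝ) :
    Integrable (fun x ↦ exp (t * X x)) μ :=
  integrable_exp_mul_of_mem_Icc hX.aemeasurable (hb.mono fun _ hx ↦ abs_le.1 hx)

lemma exp_mul_expect_eq_prod (t : ℝ) (f : ι → ℝ) :
    exp (t * 𝔼 i, f i) = ∏ i, exp (t / Fintype.card ι * f i) := by
  rw [← exp_sum, ← Finset.mul_sum, Fintype.expect_eq_sum_div_card, mul_div_left_comm, mul_comm]

lemma integrable_exp_mul_expect_pi [IsFiniteMeasure μ] {f : α → ℝ} {b : ℝ}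
    (hf : AEStronglyMeasurable f μ) (hb : ∀ᵐ x ∂μ, |f x| ≤ b) (t : ℝ) :
    Integrable (fun x : ι → α ↦ exp (t * 𝔼 i, f (x i))) (Measure.pi fun _ ↦ μ) := by
  simp only [exp_mul_expect_eq_prod]
  exact Integrable.fintype_prod fun _ ↦ integrable_exp_mul_of_abs_le hf hb _

lemma mgf_expect_pi [SigmaFinite μ] (f : α → ℝ) (t : ℝ) :
    mgf (fun x : ι → α ↦ 𝔼 i, f (x i)) (Measure.pi fun _ ↦ μ) t =
      mgf f μ (t / Fintype.card ι) ^ Fintype.card ι := by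
  simp only [mgf, exp_mul_expect_eq_prod]
  exact integral_fintype_prod_eq_pow fun x ↦ exp (t / Fintype.card ι * f x)

lemma mgf_prod_sub [SFinite μ] [SFinite ρ] (X : α → ℝ) (Y : β → ℝ) (t : ℝ) :
    mgf (fun z : α × β ↦ X z.1 - Y z.2) (μ.prod ρ) t = mgf X μ t * mgf Y ρ (-t) := by
  simp only [mgf, ← integral_prod_mul, ← exp_add, neg_mul, sub_eq_add_neg, mul_add, mul_neg]

lemma integrable_exp_mul_prod_sub {X : α → ℝ} {Y : β → ℝ} {t : ℝ}
    (hX : Integrable (fun x ↦ exp (t * X x)) μ) (hY : Integrable (fun y ↦ exp (-t * Y y)) ρ) :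
    Integrable (fun z : α × β ↦ exp (t * (X z.1 - Y z.2))) (μ.prod ρ) := by
  simpa only [← exp_add, neg_mul, sub_eq_add_neg, mul_add, mul_neg] using hX.mul_prod hY

variable [IsProbabilityMeasure μ]

lemma mgf_le_exp_of_abs_le {X : α → ℝ} {b t : ℝ} (hX : AEStronglyMeasurable X μ)
    (hb : ∀ᵐ x ∂μ, |X x| ≤ b) (ht : |t| * b ≤ 1) :
    mgf X μ t ≤ exp (t * ∫ x, X x ∂μ + t ^ 2 * ∫ x, X x ^ 2 ∂μ) := by
  have hXint : Integrable X μ := .of_bound hX b hb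
  have hX2int : Integrable (fun x ↦ X x ^ 2) μ := (MemLp.of_bound hX b hb).integrable_sq
  have hlin : Integrable (fun x ↦ 1 + t * X x) μ :=
    (integrable_const 1).add (hXint.const_mul t)
  have hquad : ∀ᵐ x ∂μ, exp (t * X x) ≤ 1 + t * X x + t ^ 2 * X x ^ 2 := by
    filter_upwards [hb] with x hx
    have htX : |t * X x| ≤ 1 := by rw [abs_mul]; exact (by gcongr : _ ≤ |t| * b).trans ht
    rw [← mul_pow]
    linarith [(abs_le.1 (abs_exp_sub_one_sub_id_le htX)).2]
  calc mgf X μ t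
      ≤ ∫ x, (1 + t * X x + t ^ 2 * X x ^ 2) ∂μ :=
        integral_mono_ae (integrable_exp_mul_of_abs_le hX hb t) (hlin.add (hX2int.const_mul _))
          hquad
    _ = 1 + (t * ∫ x, X x ∂μ + t ^ 2 * ∫ x, X x ^ 2 ∂μ) := by
        rw [integral_add hlin (hX2int.const_mul _),
          integral_add (integrable_const 1) (hXint.const_mul t), integral_const_mul,
          integral_const_mul, integral_const, probReal_univ, one_smul, add_assoc]
    _ ≤ _ := by rw [add_comm]; exact add_one_le_exp _

lemma mgf_expect_pi_le [Nonempty ι] {f : α → ℝ} {b t : ℝ} (hf : AEStronglyMeasurable f μ)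
    (hb : ∀ᵐ x ∂μ, |f x| ≤ b) (ht : |t| * b ≤ Fintype.card ι) :
    mgf (fun x : ι → α ↦ 𝔼 i, f (x i)) (Measure.pi fun _ ↦ μ) t ≤
      exp (t * ∫ x, f x ∂μ + t ^ 2 / Fintype.card ι * ∫ x, f x ^ 2 ∂μ) := by
  have hcard : (0 : ℝ) < Fintype.card ι := mod_cast Fintype.card_pos
  have ht' : |t / Fintype.card ι| * b ≤ 1 := by
    rwa [abs_div, Nat.abs_cast, div_mul_eq_mul_div, div_le_one hcard]
  calc mgf (fun x : ι → α ↦ 𝔼 i, f (x i)) (Measure.pi fun _ ↦ μ) t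
      ≤ exp (t / Fintype.card ι * ∫ x, f x ∂μ
          + (t / Fintype.card ι) ^ 2 * ∫ x, f x ^ 2 ∂μ) ^ Fintype.card ι := by
        rw [mgf_expect_pi]
        exact pow_le_pow_left₀ mgf_nonneg (mgf_le_exp_of_abs_le hf hb ht') _
    _ = _ := by
        rw [← exp_nat_mul]
        congr 1
        field_simp

variable [IsProbabilityMeasure ρ]

lemma measureReal_pi_prod_le_exp [Nonempty ι] [Nonempty κ] {f : α → ℝ} {g : β → ℝ} {b s τ : ℝ}
    (hf : AEStronglyMeasurable f μ) (hg : AEStronglyMeasurable g ρ)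
    (hfb : ∀ᵐ x ∂μ, |f x| ≤ b) (hgb : ∀ᵐ y ∂ρ, |g y| ≤ b) (hs : 0 ≤ s)
    (hsι : s * b ≤ Fintype.card ι) (hsκ : s * b ≤ Fintype.card κ) :
    ((Measure.pi fun _ : ι ↦ μ).prod (Measure.pi fun _ : κ ↦ ρ)).real
        {z | ∫ x, f x ∂μ - ∫ y, g y ∂ρ + τ ≤ 𝔼 i, f (z.1 i) - 𝔼 j, g (z.2 j)} ≤
      exp (-(s * τ) + s ^ 2 * ((∫ x, f x ^ 2 ∂μ) / Fintype.card ι +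
        (∫ y, g y ^ 2 ∂ρ) / Fintype.card κ)) := by
  set S : (ι → α) × (κ → β) → ℝ := fun z ↦ 𝔼 i, f (z.1 i) - 𝔼 j, g (z.2 j)
  set P := (Measure.pi fun _ : ι ↦ μ).prod (Measure.pi fun _ : κ ↦ ρ)
  have hint : Integrable (fun z ↦ exp (s * S z)) P :=
    integrable_exp_mul_prod_sub (integrable_exp_mul_expect_pi hf hfb s)
      (integrable_exp_mul_expect_pi hg hgb (-s))
  have hmgf : mgf S P s ≤
      exp (s * ∫ x, f x ∂μ + s ^ 2 / Fintype.card ι * ∫ x, f x ^ 2 ∂μ) *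
        exp (-s * ∫ y, g y ∂ρ + (-s) ^ 2 / Fintype.card κ * ∫ y, g y ^ 2 ∂ρ) := by
    rw [mgf_prod_sub (fun x : ι → α ↦ 𝔼 i, f (x i)) fun y : κ → β ↦ 𝔼 j, g (y j)]
    exact mul_le_mul (mgf_expect_pi_le hf hfb (by rwa [abs_of_nonneg hs]))
      (mgf_expect_pi_le hg hgb (by rwa [abs_neg, abs_of_nonneg hs])) mgf_nonneg (exp_nonneg _)
  refine (measure_ge_le_exp_mul_mgf _ hs hint).trans <|
    (mul_le_mul_of_nonneg_left hmgf (exp_nonneg _)).trans_eq ?_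
  rw [← exp_add, ← exp_add]
  ring_nf

lemma measureReal_pi_prod_le_exp_of_integral_sq_le {f : α → ℝ} {g : β → ℝ} {b N W τ : ℝ}
    (hf : AEStronglyMeasurable f μ) (hg : AEStronglyMeasurable g ρ)
    (hfb : ∀ᵐ x ∂μ, |f x| ≤ b) (hgb : ∀ᵐ y ∂ρ, |g y| ≤ b)
    (hfW : ∫ x, f x ^ 2 ∂μ ≤ W) (hgW : ∫ y, g y ^ 2 ∂ρ ≤ W) (hN : 0 < N) (hW : 0 < W)
    (hι : N ≤ Fintype.card ι) (hκ : N ≤ Fintype.card κ) (hτ : 0 ≤ τ) (hτW : τ * b ≤ 6 * W) :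
    ((Measure.pi fun _ : ι ↦ μ).prod (Measure.pi fun _ : κ ↦ ρ)).real
        {z | ∫ x, f x ∂μ - ∫ y, g y ∂ρ + τ ≤ 𝔼 i, f (z.1 i) - 𝔼 j, g (z.2 j)} ≤
      exp (-(N * τ ^ 2 / (9 * W))) := by
  have : Nonempty ι := Fintype.card_pos_iff.1 <| mod_cast hN.trans_le hι
  have : Nonempty κ := Fintype.card_pos_iff.1 <| mod_cast hN.trans_le hκ
  -- The bound is minimised at `s = Nτ/(4W)`; with `6` in place of `4` the constraint `s * b ≤ N`
  -- becomes the assumption `τ * b ≤ 6 * W`.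
  set s := N * τ / (6 * W) with hs
  have hsb : s * b ≤ N := by
    rw [hs, div_mul_eq_mul_div, div_le_iff₀ (by positivity), mul_assoc]
    gcongr
  have hvar : (∫ x, f x ^ 2 ∂μ) / Fintype.card ι + (∫ y, g y ^ 2 ∂ρ) / Fintype.card κ ≤
      W / N + W / N := by
    gcongr
  refine (measureReal_pi_prod_le_exp hf hg hfb hgb (by positivity) (hsb.trans hι)
    (hsb.trans hκ)).trans (exp_le_exp.2 ?_)
  calc -(s * τ) + s ^ 2 * ((∫ x, f x ^ 2 ∂μ) / Fintype.card ι +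
        (∫ y, g y ^ 2 ∂ρ) / Fintype.card κ)
      ≤ -(s * τ) + s ^ 2 * (W / N + W / N) := by gcongr
    _ = -(N * τ ^ 2 / (9 * W)) := by
        rw [hs]
        field_simp
        ring

lemma measureReal_pi_add_le_expect_le {h : α → ℝ} {a b ε : ℝ} (hh : AEMeasurable h μ)
    (hab : ∀ᵐ x ∂μ, h x ∈ Set.Icc a b) (hε : 0 ≤ ε) :
    (Measure.pi fun _ : ι ↦ μ).real {x | ∫ y, h y ∂μ + ε ≤ 𝔼 i, h (x i)} ≤
      exp (-(2 * Fintype.card ι * ε ^ 2 / (b - a) ^ 2)) := by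
  have hindep : iIndepFun (fun (i : ι) (x : ι → α) ↦ h (x i) - ∫ y, h y ∂μ)
      (Measure.pi fun _ ↦ μ) :=
    iIndepFun_pi (X := fun _ x ↦ h x - ∫ y, h y ∂μ) fun _ ↦ hh.sub_const _
  have hsubG (i : ι) : HasSubgaussianMGF (fun x : ι → α ↦ h (x i) - ∫ y, h y ∂μ)
      ((‖b - a‖₊ / 2) ^ 2) (Measure.pi fun _ ↦ μ) := by
    have heval := measurePreserving_eval (fun _ : ι ↦ μ) i
    refine HasSubgaussianMGF.of_map (X := fun x ↦ h x - ∫ y, h y ∂μ)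
      heval.measurable.aemeasurable ?_
    rw [heval.map_eq]
    exact hasSubgaussianMGF_of_mem_Icc hh hab
  calc (Measure.pi fun _ : ι ↦ μ).real {x | ∫ y, h y ∂μ + ε ≤ 𝔼 i, h (x i)}
      ≤ (Measure.pi fun _ : ι ↦ μ).real
          {x | Fintype.card ι * ε ≤ ∑ i, (h (x i) - ∫ y, h y ∂μ)} := by
        refine measureReal_mono fun x hx ↦ ?_
        simp only [Set.mem_ofPred_eq, Finset.sum_sub_distrib, Finset.sum_const, Finset.card_univ,
          nsmul_eq_mul, ← Fintype.card_mul_expect] at hx ⊢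
        rw [← mul_sub]
        gcongr
        linarith
    _ ≤ _ := (HasSubgaussianMGF.measure_sum_ge_le_of_iIndepFun hindep (fun i _ ↦ hsubG i)
        (by positivity))
    _ = exp (-(2 * Fintype.card ι * ε ^ 2 / (b - a) ^ 2)) := by
        cases isEmpty_or_nonempty ι
        · simp
        · rw [Finset.sum_const, Finset.card_univ, nsmul_eq_mul]
          push_cast [coe_nnnorm, norm_eq_abs]
          rw [div_pow, sq_abs]
          field_simp

end Concentration

section NTKWitness

variable {Ω : Type*} {K : Ω → Ω → ℝ}

lemma ntkWitness_eq_expect (n m : ℕ) (D : (Fin n → Ω) × (Fin m → Ω)) (x : Ω) :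
    ntkWitness K n m D x = 𝔼 j, K x (D.1 j) - 𝔼 j, K x (D.2 j) := by
  simp only [ntkWitness, Fintype.expect_eq_sum_div_card, Fintype.card_fin, one_div_mul_eq_div]

lemma asymMMD_eq_expect_ntkWitness (n m k l : ℕ) (D : (Fin n → Ω) × (Fin m → Ω))
    (D' : (Fin k → Ω) × (Fin l → Ω)) :
    asymMMD K n m k l D D' =
      𝔼 i, ntkWitness K n m D (D'.1 i) - 𝔼 i, ntkWitness K n m D (D'.2 i) := by
  simp only [asymMMD, ntkWitness, Fintype.expect_eq_sum_div_card, Fintype.card_fin,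
    Finset.sum_sub_distrib, ← Finset.mul_sum]
  ring

lemma abs_ntkWitness_le_two (hK : ∀ x y, |K x y| ≤ 1) (n m : ℕ)
    (D : (Fin n → Ω) × (Fin m → Ω)) (x : Ω) : |ntkWitness K n m D x| ≤ 2 := by
  rw [ntkWitness_eq_expect]
  calc |𝔼 j, K x (D.1 j) - 𝔼 j, K x (D.2 j)|
      ≤ |𝔼 j, K x (D.1 j)| + |𝔼 j, K x (D.2 j)| := abs_sub _ _
    _ ≤ 1 + 1 := add_le_add (abs_expect_le_of_forall_abs_le zero_le_one fun _ ↦ hK _ _)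
        (abs_expect_le_of_forall_abs_le zero_le_one fun _ ↦ hK _ _)
    _ = 2 := one_add_one_eq_two

variable [MeasurableSpace Ω] {μ : Measure Ω}

lemma measurable_ntkWitness (hK : Measurable (Function.uncurry K)) (n m : ℕ)
    (D : (Fin n → Ω) × (Fin m → Ω)) : Measurable (ntkWitness K n m D) := by
  simp only [funext fun x ↦ ntkWitness_eq_expect (K := K) n m D x]
  exact (measurable_expect fun j ↦ hK.of_uncurry_right).sub
    (measurable_expect fun j ↦ hK.of_uncurry_right)

/-- The second moment `∫ K(z, y)² dμ(y)` of the kernel section at `z`. Its averages over the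
training points control the second moment of the witness function under `μ`. -/
noncomputable def kernelEnergy (K : Ω → Ω → ℝ) (μ : Measure Ω) (z : Ω) : ℝ :=
  ∫ y, K z y ^ 2 ∂μ

lemma kernelEnergy_mem_Icc [IsProbabilityMeasure μ] (hK : ∀ x y, |K x y| ≤ 1) (z : Ω) :
    kernelEnergy K μ z ∈ Set.Icc 0 1 := by
  refine ⟨integral_nonneg fun _ ↦ sq_nonneg _, ?_⟩
  simpa [kernelEnergy] using integral_mono_of_nonneg (μ := μ)
    (ae_of_all _ fun y ↦ sq_nonneg (K z y)) (integrable_const 1)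
    (ae_of_all _ fun y ↦ (sq_le_one_iff_abs_le_one _).2 (hK z y))

lemma measurable_kernelEnergy [SFinite μ] (hK : Measurable (Function.uncurry K)) :
    Measurable (kernelEnergy K μ) :=
  (hK.pow_const 2).stronglyMeasurable.integral_prod_right.measurable

lemma integral_kernelEnergy_comm {p q : Measure Ω} [IsFiniteMeasure p] [IsFiniteMeasure q]
    (hK : Measurable (Function.uncurry K)) (hsymm : ∀ x y, K x y = K y x)
    (hK1 : ∀ x y, |K x y| ≤ 1) :
    ∫ x, kernelEnergy K p x ∂q = ∫ x, kernelEnergy K q x ∂p := by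
  have hint : Integrable (Function.uncurry fun x y ↦ K x y ^ 2) (q.prod p) :=
    .of_bound (hK.pow_const 2).aestronglyMeasurable 1 <| ae_of_all _ fun z ↦ by
      simpa [Function.uncurry] using hK1 z.1 z.2
  simp only [kernelEnergy]
  rw [integral_integral_swap hint]
  simp only [hsymm]

lemma integral_sq_ntkWitness_le [IsFiniteMeasure μ] (hK : Measurable (Function.uncurry K))
    (hsymm : ∀ x y, K x y = K y x) (hK1 : ∀ x y, |K x y| ≤ 1) {n m : ℕ}
    (D : (Fin n → Ω) × (Fin m → Ω)) :
    ∫ x, ntkWitness K n m D x ^ 2 ∂μ ≤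
      2 * (𝔼 j, kernelEnergy K μ (D.1 j) + 𝔼 j, kernelEnergy K μ (D.2 j)) := by
  have hint (z : Ω) : Integrable (fun x ↦ K z x ^ 2) μ :=
    (MemLp.of_bound hK.of_uncurry_left.aestronglyMeasurable 1
      (ae_of_all _ fun x ↦ hK1 z x)).integrable_sq
  simp only [ntkWitness_eq_expect, hsymm _ (D.1 _), hsymm _ (D.2 _)]
  exact integral_sq_expect_sub_expect_le (fun _ ↦ hint _) fun _ ↦ hint _

end NTKWitness

section TrainingEvent

/-- The pairs of samples over each of which `h` has empirical mean at most `c`. -/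
def expectLEEvent {Ω : Type*} (ι κ : Type*) [Fintype ι] [Fintype κ] (h : Ω → ℝ) (c : ℝ) :
    Set ((ι → Ω) × (κ → Ω)) :=
  {D | 𝔼 i, h (D.1 i) ≤ c ∧ 𝔼 j, h (D.2 j) ≤ c}

variable {ι κ Ω : Type*} [Fintype ι] [Fintype κ] [MeasurableSpace Ω] {h : Ω → ℝ}

lemma measurableSet_expectLEEvent {c : ℝ} (hh : Measurable h) :
    MeasurableSet (expectLEEvent ι κ h c) :=
  (measurableSet_le (measurable_expect fun i ↦ by fun_prop) measurable_const).inter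
    (measurableSet_le (measurable_expect fun j ↦ by fun_prop) measurable_const)

variable {p q : Measure Ω} [IsProbabilityMeasure p] [IsProbabilityMeasure q]

lemma measureReal_pi_lt_expect_le {N ν ε : ℝ} (hh : Measurable h) (hh1 : ∀ x, h x ∈ Set.Icc 0 1)
    (hν : ∫ x, h x ∂p ≤ ν) (hε : 0 ≤ ε) (hN : N ≤ Fintype.card ι) :
    (Measure.pi fun _ : ι ↦ p).real {x | ν + ε < 𝔼 i, h (x i)} ≤ exp (-(2 * N * ε ^ 2)) := by
  calc (Measure.pi fun _ : ι ↦ p).real {x | ν + ε < 𝔼 i, h (x i)}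
      ≤ (Measure.pi fun _ : ι ↦ p).real {x | ∫ y, h y ∂p + ε ≤ 𝔼 i, h (x i)} :=
        measureReal_mono fun x hx ↦ (add_le_add_left hν ε).trans (le_of_lt hx)
    _ ≤ exp (-(2 * Fintype.card ι * ε ^ 2)) := by
        simpa using measureReal_pi_add_le_expect_le hh.aemeasurable (ae_of_all _ hh1) hε
    _ ≤ exp (-(2 * N * ε ^ 2)) := by gcongr

lemma measureReal_compl_expectLEEvent_le {N ν ε : ℝ} (hh : Measurable h)
    (hh1 : ∀ x, h x ∈ Set.Icc 0 1) (hp : ∫ x, h x ∂p ≤ ν) (hq : ∫ x, h x ∂q ≤ ν) (hε : 0 ≤ ε)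
    (hι : N ≤ Fintype.card ι) (hκ : N ≤ Fintype.card κ) :
    ((Measure.pi fun _ : ι ↦ p).prod (Measure.pi fun _ : κ ↦ q)).real
      (expectLEEvent ι κ h (ν + ε))ᶜ ≤ 2 * exp (-(2 * N * ε ^ 2)) := by
  set A : Set (ι → Ω) := {x | ν + ε < 𝔼 i, h (x i)}
  set B : Set (κ → Ω) := {y | ν + ε < 𝔼 j, h (y j)}
  have hcompl : (expectLEEvent ι κ h (ν + ε))ᶜ = A ×ˢ Set.univ ∪ Set.univ ×ˢ B := by
    ext D
    simp [expectLEEvent, A, B, imp_iff_not_or]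
  have hA := measureReal_pi_lt_expect_le hh hh1 hp hε hι
  have hB := measureReal_pi_lt_expect_le hh hh1 hq hε hκ
  calc _ ≤ _ := hcompl ▸ measureReal_union_le _ _
    _ = (Measure.pi fun _ ↦ p).real A + (Measure.pi fun _ ↦ q).real B := by
        simp only [measureReal_prod_prod, probReal_univ, mul_one, one_mul]
    _ ≤ 2 * exp (-(2 * N * ε ^ 2)) := by linarith

end TrainingEvent

section LowEnergy

variable {Ω : Type*} [MeasurableSpace Ω] {K : Ω → Ω → ℝ} {p q : Measure Ω}

/-- The training configurations whose average kernel energies, with respect to both `p` and `q`,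
are at most `V`; on this event the witness function has second moments at most `4 V`. -/
def lowEnergyEvent (K : Ω → Ω → ℝ) (p q : Measure Ω) (n m : ℕ) (V : ℝ) :
    Set ((Fin n → Ω) × (Fin m → Ω)) :=
  expectLEEvent (Fin n) (Fin m) (kernelEnergy K p) V ∩
    expectLEEvent (Fin n) (Fin m) (kernelEnergy K q) V

lemma measurableSet_lowEnergyEvent [SFinite p] [SFinite q]
    (hK : Measurable (Function.uncurry K)) {n m : ℕ} {V : ℝ} :
    MeasurableSet (lowEnergyEvent K p q n m V) :=
  (measurableSet_expectLEEvent (measurable_kernelEnergy hK)).inter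
    (measurableSet_expectLEEvent (measurable_kernelEnergy hK))

lemma integral_sq_ntkWitness_le_of_mem_lowEnergyEvent [IsFiniteMeasure p] [IsFiniteMeasure q]
    (hK : Measurable (Function.uncurry K)) (hsymm : ∀ x y, K x y = K y x)
    (hK1 : ∀ x y, |K x y| ≤ 1) {n m : ℕ} {V : ℝ}
    {D : (Fin n → Ω) × (Fin m → Ω)} (hD : D ∈ lowEnergyEvent K p q n m V) :
    ∫ x, ntkWitness K n m D x ^ 2 ∂p ≤ 4 * V ∧ ∫ x, ntkWitness K n m D x ^ 2 ∂q ≤ 4 * V := by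
  obtain ⟨⟨hpX, hpY⟩, hqX, hqY⟩ := hD
  constructor
  · linarith [integral_sq_ntkWitness_le (μ := p) hK hsymm hK1 D]
  · linarith [integral_sq_ntkWitness_le (μ := q) hK hsymm hK1 D]

variable [IsProbabilityMeasure p] [IsProbabilityMeasure q]

lemma measureReal_compl_lowEnergyEvent_le (hK : Measurable (Function.uncurry K))
    (hsymm : ∀ x y, K x y = K y x) (hK1 : ∀ x y, |K x y| ≤ 1) {ν ε N : ℝ}
    (hpp : ∫ x, ∫ y, K x y ^ 2 ∂p ∂p ≤ ν) (hpq : ∫ x, ∫ y, K x y ^ 2 ∂q ∂p ≤ ν)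
    (hqq : ∫ x, ∫ y, K x y ^ 2 ∂q ∂q ≤ ν) (hε : 0 ≤ ε) {n m : ℕ} (hn : N ≤ n) (hm : N ≤ m) :
    ((Measure.pi fun _ : Fin n ↦ p).prod (Measure.pi fun _ : Fin m ↦ q)).real
      (lowEnergyEvent K p q n m (ν + ε))ᶜ ≤ 4 * exp (-(2 * N * ε ^ 2)) := by
  have hqp : ∫ x, kernelEnergy K p x ∂q ≤ ν :=
    (integral_kernelEnergy_comm hK hsymm hK1).trans_le hpq
  rw [← Fintype.card_fin n] at hn
  rw [← Fintype.card_fin m] at hm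
  have hEp := measureReal_compl_expectLEEvent_le (measurable_kernelEnergy hK)
    (kernelEnergy_mem_Icc hK1) hpp hqp hε hn hm
  have hEq := measureReal_compl_expectLEEvent_le (measurable_kernelEnergy hK)
    (kernelEnergy_mem_Icc hK1) hpq hqq hε hn hm
  rw [lowEnergyEvent, Set.compl_inter]
  linarith [measureReal_union_le (μ := (Measure.pi fun _ : Fin n ↦ p).prod
    (Measure.pi fun _ : Fin m ↦ q)) (expectLEEvent (Fin n) (Fin m) (kernelEnergy K p) (ν + ε))ᶜ
    (expectLEEvent (Fin n) (Fin m) (kernelEnergy K q) (ν + ε))ᶜ]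

lemma measureReal_asymMMD_gt_le (hK : Measurable (Function.uncurry K))
    (hsymm : ∀ x y, K x y = K y x) (hK1 : ∀ x y, |K x y| ≤ 1) {n m k l : ℕ} {N V t : ℝ}
    {D : (Fin n → Ω) × (Fin m → Ω)} (hD : D ∈ lowEnergyEvent K p q n m V)
    (hN : 0 < N) (hV : 0 < V) (hk : N ≤ k) (hl : N ≤ l) (ht : 0 ≤ t) (htV : t ≤ 3 * √(V * N)) :
    ((Measure.pi fun _ : Fin k ↦ p).prod (Measure.pi fun _ : Fin l ↦ q)).real
        {D' | asymMMD K n m k l D D' > condMeanC K n m p q D + 4 * t * √(V / N)} ≤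
      exp (-(4 / 9 * t ^ 2)) := by
  obtain ⟨hp, hq⟩ := integral_sq_ntkWitness_le_of_mem_lowEnergyEvent hK hsymm hK1 hD
  have hsqrt : √(V * N) * √(V / N) = V := by
    rw [← sqrt_mul (by positivity), show V * N * (V / N) = V ^ 2 by field_simp, sqrt_sq hV.le]
  have hrange : 4 * t * √(V / N) * 2 ≤ 6 * (4 * V) := by
    have := mul_le_mul_of_nonneg_right htV (sqrt_nonneg (V / N))
    linarith
  have hexponent : N * (4 * t * √(V / N)) ^ 2 / (9 * (4 * V)) = 4 / 9 * t ^ 2 := by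
    rw [mul_pow, sq_sqrt (by positivity)]
    field_simp
  have hmeas := measurable_ntkWitness hK n m D
  have hbound := abs_ntkWitness_le_two hK1 n m D
  rw [← hexponent]
  refine (measureReal_mono fun D' hD' ↦ ?_).trans <|
    measureReal_pi_prod_le_exp_of_integral_sq_le hmeas.aestronglyMeasurable
      hmeas.aestronglyMeasurable (ae_of_all _ hbound) (ae_of_all _ hbound) hp hq hN
      (by positivity) (by simpa) (by simpa) (by positivity) hrange
  rw [Set.mem_ofPred_eq, asymMMD_eq_expect_ntkWitness] at hD'
  exact hD'.le

lemma exp_neg_two_mul_le_of_sqrt_log_le {m ε δ : ℝ} (hm : 0 < m) (hδ : 0 < δ)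
    (h : √(log (1 / δ) / (2 * m)) ≤ ε) : exp (-(2 * m * ε ^ 2)) ≤ δ := by
  have hlog : log (1 / δ) ≤ ε ^ 2 * (2 * m) :=
    (div_le_iff₀ (by positivity)).1 ((sqrt_le_left ((sqrt_nonneg _).trans h)).1 h)
  rw [one_div, log_inv] at hlog
  rw [← le_log_iff_exp_le hδ]
  linarith

theorem asym_mmd_conditional_concentration_H0_general
    (hK : Measurable (Function.uncurry K)) (hsymm : ∀ x y, K x y = K y x)
    (hK1 : ∀ x y, |K x y| ≤ 1) {ν : ℝ}
    (hpp : ∫ x, ∫ y, K x y ^ 2 ∂p ∂p ≤ ν) (hpq : ∫ x, ∫ y, K x y ^ 2 ∂q ∂p ≤ ν)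
    (hqq : ∫ x, ∫ y, K x y ^ 2 ∂q ∂q ≤ ν)
    {n n1X n1Y n2X n2Y : ℕ} {ca : ℝ} (hca : 0 < ca)
    (h1X : ca * n ≤ n1X) (h1Y : ca * n ≤ n1Y) (h2X : ca * n ≤ n2X) (h2Y : ca * n ≤ n2Y)
    {δ : ℝ} (hδ : 0 < δ) (hδν : √(log (1 / δ) / (2 * ca * n)) ≤ 0.1 * ν) :
    ∃ E : Set ((Fin n1X → Ω) × (Fin n1Y → Ω)), MeasurableSet E ∧
      1 - ENNReal.ofReal (4 * δ) ≤
        ((Measure.pi fun _ : Fin n1X ↦ p).prod (Measure.pi fun _ : Fin n1Y ↦ q)) E ∧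
      ∀ D ∈ E, ∀ t : ℝ, 0 < t → t < 3 * √(1.1 * ν * ca * n) →
        ((Measure.pi fun _ : Fin n2X ↦ p).prod (Measure.pi fun _ : Fin n2Y ↦ q))
          {D' | asymMMD K n1X n1Y n2X n2Y D D' >
            condMeanC K n1X n1Y p q D + 4 * t * √(1.1 * ν / (ca * n))} ≤
          ENNReal.ofReal (4 * exp (-t ^ 2 / 4)) := by
  rcases n.eq_zero_or_pos with rfl | hn
  · refine ⟨Set.univ, .univ, by simp, fun D _ t ht htV ↦ absurd htV ?_⟩
    simpa using ht.le
  have hN : 0 < ca * n := by positivity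
  have hε : 0 ≤ 0.1 * ν := (sqrt_nonneg _).trans hδν
  refine ⟨lowEnergyEvent K p q n1X n1Y (ν + 0.1 * ν), measurableSet_lowEnergyEvent hK, ?_,
    fun D hD t ht htV ↦ ?_⟩
  · have hcompl := measureReal_compl_lowEnergyEvent_le hK hsymm hK1 hpp hpq hqq hε h1X h1Y
    have hexp : exp (-(2 * (ca * n) * (0.1 * ν) ^ 2)) ≤ δ :=
      exp_neg_two_mul_le_of_sqrt_log_le hN hδ (by rwa [← mul_assoc])
    rw [probReal_compl_eq_one_sub (measurableSet_lowEnergyEvent hK)] at hcompl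
    rw [← ENNReal.ofReal_one, ← ENNReal.ofReal_sub _ (by positivity), ← ofReal_measureReal]
    exact ENNReal.ofReal_le_ofReal (by linarith)
  · rw [show ν + 0.1 * ν = 1.1 * ν by ring] at hD
    rw [mul_assoc (1.1 * ν)] at htV
    have hV : 0 < 1.1 * ν := by
      have := sqrt_pos.1 (show 0 < √(1.1 * ν * (ca * n)) by linarith)
      exact pos_of_mul_pos_left this hN.le
    rw [← ofReal_measureReal]
    refine ENNReal.ofReal_le_ofReal <|
      (measureReal_asymMMD_gt_le hK hsymm hK1 hD hN hV h2X h2Y ht.le htV.le).trans ?_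
    calc exp (-(4 / 9 * t ^ 2)) ≤ exp (-t ^ 2 / 4) := by gcongr; linarith [sq_nonneg t]
      _ ≤ 4 * exp (-t ^ 2 / 4) := by linarith [exp_pos (-t ^ 2 / 4)]

end LowEnergy

/-- Proposition B.3, part 1: under `H₀ : p = q`, for `0 < δ < 1` with
`√(log(1/δ)/(2c_a n)) ≤ 0.1ν`, there is a good event `E` of training data with
`P₍₁₎(E) ≥ 1 − 4δ` under which, for all `0 < λ < 3√(1.1νc_a n)`,
`P₍₂₎[T̂_a > Ĉ + 4λ√(1.1ν/(c_a n))] ≤ 4e^{−λ²/4}`. -/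
theorem asym_mmd_conditional_concentration_H0
    {d : ℕ} (𝒳 : Set (EuclideanSpace ℝ (Fin d))) (h𝒳 : MeasurableSet 𝒳)
    (K : 𝒳 → 𝒳 → ℝ)
    (hKmeas : Measurable (Function.uncurry K))
    (hKsym : ∀ x y, K x y = K y x)
    (hKpsd : ∀ (m : ℕ) (z : Fin m → 𝒳) (a : Fin m → ℝ),
      0 ≤ ∑ i, ∑ j, a i * a j * K (z i) (z j))
    (hKbdd : ∀ x y, |K x y| ≤ 1)
    (p q : Measure 𝒳) [IsProbabilityMeasure p] [IsProbabilityMeasure q]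
    (ν : ℝ) (hν1 : ν ≤ 1)
    (hνpp : ∫ x, ∫ y, (K x y)^2 ∂p ∂p ≤ ν)
    (hνpq : ∫ x, ∫ y, (K x y)^2 ∂q ∂p ≤ ν)
    (hνqq : ∫ x, ∫ y, (K x y)^2 ∂q ∂q ≤ ν)
    (n1X n1Y n2X n2Y : ℕ) (ca : ℝ) (hca : 0 < ca) (hca1 : ca < 1)
    (hbal1 : ca * ((n1X + n1Y + n2X + n2Y : ℕ) : ℝ) ≤ (n1X : ℝ))
    (hbal2 : ca * ((n1X + n1Y + n2X + n2Y : ℕ) : ℝ) ≤ (n1Y : ℝ))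
    (hbal3 : ca * ((n1X + n1Y + n2X + n2Y : ℕ) : ℝ) ≤ (n2X : ℝ))
    (hbal4 : ca * ((n1X + n1Y + n2X + n2Y : ℕ) : ℝ) ≤ (n2Y : ℝ))
    (hH0 : p = q)
    (δ : ℝ) (hδ0 : 0 < δ) (hδ1 : δ < 1)
    (hδν : Real.sqrt (Real.log (1/δ) / (2 * ca * ((n1X + n1Y + n2X + n2Y : ℕ) : ℝ)))
      ≤ 0.1 * ν) :
    ∃ E : Set ((Fin n1X → 𝒳) × (Fin n1Y → 𝒳)), MeasurableSet E ∧
      1 - ENNReal.ofReal (4 * δ) ≤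
        ((Measure.pi fun _ : Fin n1X => p).prod (Measure.pi fun _ : Fin n1Y => q)) E ∧
      ∀ dtr ∈ E, ∀ lam : ℝ, 0 < lam →
        lam < 3 * Real.sqrt (1.1 * ν * ca * ((n1X + n1Y + n2X + n2Y : ℕ) : ℝ)) →
        ((Measure.pi fun _ : Fin n2X => p).prod (Measure.pi fun _ : Fin n2Y => q))
          {dte : (Fin n2X → 𝒳) × (Fin n2Y → 𝒳) |
            asymMMD K n1X n1Y n2X n2Y dtr dte >
              condMeanC K n1X n1Y p q dtr
              + 4 * lam * Real.sqrt (1.1 * ν / (ca * ((n1X + n1Y + n2X + n2Y : ℕ) : ℝ)))}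
          ≤ ENNReal.ofReal (4 * Real.exp (-lam^2 / 4)) :=
  asym_mmd_conditional_concentration_H0_general hKmeas hKsym hKbdd hνpp hνpq hνqq hca hbal1 hbal2
    hbal3 hbal4 hδ0 hδν
end

section
/- (Proposition B.4, part 1: concentration of T̂_a under H0.) Assume p = q. Then for any 0 < λ < 3 √(c_a ν n), with probability at least 1 − 4 e^{−λ²/8} under the joint product law of the four samples, T̂_a ≤ 4 λ √(ν/(c_a n)). -/
open MeasureTheory Real
open scoped BigOperators ENNReal

/-!
Each of the four terms of `T̂_a` averages the kernel over all pairs formed from two independent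
samples. Following Hoeffding, a cyclic shift of the larger sample matches every point of the smaller
one with a different partner, and the average over all pairs is the average over the shifts of the
means over these matchings. A single matching consists of i.i.d. pairs, so its moment generating
function is a power of that of one pair, and Jensen's inequality carries this bound over to the
average. With `exp y ≤ 1 + y + y ^ 2` for `|y| ≤ 1` and Chernoff's bound, every term then satisfies
a Bernstein inequality with the variance of `K` and the size of the smaller sample, and a union
bound over the four terms concludes.
-/

theorem sqrt_mul_mul_sqrt_div {k v : ℝ} (hk : 0 < k) (hv : 0 ≤ v) : √(k * v) * √(v / k) = v := by
  rw [← sqrt_mul (by positivity), show k * v * (v / k) = v ^ 2 by field_simp, sqrt_sq hv]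

section MomentGeneratingFunction

open ProbabilityTheory

variable {Ω : Type*} [MeasurableSpace Ω] {P : Measure Ω}

theorem exp_expect_le_expect_exp {ι : Type*} [Fintype ι] [Nonempty ι] (a : ι → ℝ) :
    exp (𝔼 i, a i) ≤ 𝔼 i, exp (a i) := by
  simpa [Fintype.expect_eq_sum_div_card, Finset.mul_sum, div_eq_inv_mul] using
    convexOn_exp.map_sum_le (t := Finset.univ) (w := fun _ : ι ↦ (Fintype.card ι : ℝ)⁻¹)
      (p := a) (by simp) (by simp) (by simp)

theorem mgf_expect_le_expect_mgf {ι : Type*} [Fintype ι] [Nonempty ι] {X : ι → Ω → ℝ} {t : ℝ}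
    (hX : ∀ i, Integrable (fun ω ↦ exp (t * X i ω)) P) :
    mgf (fun ω ↦ 𝔼 i, X i ω) P t ≤ 𝔼 i, mgf (X i) P t := by
  have hint : Integrable (fun ω ↦ 𝔼 i, exp (t * X i ω)) P := by
    simp only [Fintype.expect_eq_sum_div_card]
    exact (integrable_finsetSum _ fun i _ ↦ hX i).div_const _
  calc mgf (fun ω ↦ 𝔼 i, X i ω) P t
      ≤ ∫ ω, 𝔼 i, exp (t * X i ω) ∂P := by
        refine integral_mono_of_nonneg (.of_forall fun _ ↦ (exp_pos _).le) hint
          (.of_forall fun ω ↦ ?_)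
        simp only [Finset.mul_expect]
        exact exp_expect_le_expect_exp _
    _ = 𝔼 i, mgf (X i) P t := by
        simp only [Fintype.expect_eq_sum_div_card, integral_div,
          integral_finsetSum _ fun i _ ↦ hX i, mgf]

theorem mgf_comp_swap {α β : Type*} [MeasurableSpace α] [MeasurableSpace β] (X : α × β → ℝ)
    (μ : Measure α) (ν : Measure β) [SFinite μ] [SFinite ν] (t : ℝ) :
    mgf (X ∘ Prod.swap) (ν.prod μ) t = mgf X (μ.prod ν) t :=
  integral_prod_swap fun z ↦ exp (t * X z)

variable [IsProbabilityMeasure P]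

theorem mgf_le_exp_sq_mul_integral_sq {X : Ω → ℝ} {c t : ℝ} (hX : AEMeasurable X P)
    (hXc : ∀ᵐ ω ∂P, |X ω| ≤ c) (hmean : P[X] = 0) (htc : |t| * c ≤ 1) :
    mgf X P t ≤ exp (t ^ 2 * P[X ^ 2]) := by
  have hX2 : MemLp X 2 P := .of_bound hX.aestronglyMeasurable c hXc
  have hint : Integrable (fun ω ↦ 1 + t * X ω) P :=
    (integrable_const 1).add ((hX2.integrable one_le_two).const_mul t)
  have hint_sq : Integrable (fun ω ↦ t ^ 2 * X ω ^ 2) P := hX2.integrable_sq.const_mul _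
  have exp_le_quadratic : ∀ᵐ ω ∂P, exp (t * X ω) ≤ 1 + t * X ω + t ^ 2 * X ω ^ 2 := by
    filter_upwards [hXc] with ω hω
    have htX : |t * X ω| ≤ 1 := by
      rw [abs_mul]
      exact (mul_le_mul_of_nonneg_left hω (abs_nonneg t)).trans htc
    have := (abs_le.1 (abs_exp_sub_one_sub_id_le htX)).2
    linarith
  calc mgf X P t
      ≤ ∫ ω, (1 + t * X ω + t ^ 2 * X ω ^ 2) ∂P :=
        integral_mono_ae (integrable_exp_mul_of_mem_Icc hX (hXc.mono fun _ ↦ abs_le.1))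
          (hint.add hint_sq) exp_le_quadratic
    _ = t ^ 2 * P[X ^ 2] + 1 := by
        rw [integral_add hint hint_sq, integral_add (integrable_const 1)
          ((hX2.integrable one_le_two).const_mul t), integral_const_mul, integral_const_mul, hmean]
        simp [add_comm]
    _ ≤ exp (t ^ 2 * P[X ^ 2]) := add_one_le_exp _

theorem mgf_le_exp_mean_add_sq_mul_variance {X : Ω → ℝ} {c t : ℝ} (hX : AEMeasurable X P)
    (hXc : ∀ᵐ ω ∂P, |X ω - P[X]| ≤ c) (htc : |t| * c ≤ 1) :
    mgf X P t ≤ exp (t * P[X] + t ^ 2 * Var[X; P]) := by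
  have hYm : AEMeasurable (fun ω ↦ X ω - P[X]) P := hX.sub_const _
  have hint : Integrable X P := by
    simpa only [Pi.add_def, sub_add_cancel] using
      (Integrable.of_bound hYm.aestronglyMeasurable c hXc).add (integrable_const P[X])
  have hmean : ∫ ω, (X ω - P[X]) ∂P = 0 := by
    rw [integral_sub hint (integrable_const _)]
    simp
  calc mgf X P t
      = exp (t * P[X]) * mgf (fun ω ↦ X ω - P[X]) P t := by
        simp only [mgf]
        rw [← integral_const_mul]
        simp only [← exp_add, mul_sub, add_sub_cancel]
    _ ≤ exp (t * P[X]) * exp (t ^ 2 * Var[X; P]) := by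
        rw [variance_eq_integral hX]
        gcongr
        exact mgf_le_exp_sq_mul_integral_sq hYm hXc hmean htc
    _ = exp (t * P[X] + t ^ 2 * Var[X; P]) := (exp_add _ _).symm

end MomentGeneratingFunction

section TwoSampleMean

open ProbabilityTheory

variable {α β ι κ : Type*} [Fintype ι] [Fintype κ]

/-- The two-sample U-statistic of degree `(1, 1)`: the average of the kernel `f` over all pairs of
a point of the sample `x` and a point of the sample `y`. -/
noncomputable def twoSampleMean (f : α → β → ℝ) (x : ι → α) (y : κ → β) : ℝ :=
  𝔼 i, 𝔼 j, f (x i) (y j)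

theorem twoSampleMean_swap (f : α → β → ℝ) (x : ι → α) (y : κ → β) :
    twoSampleMean (fun b a ↦ f a b) y x = twoSampleMean f x y :=
  Finset.expect_comm _ _ _

theorem twoSampleMean_neg (f : α → β → ℝ) (x : ι → α) (y : κ → β) :
    twoSampleMean (fun a b ↦ -f a b) x y = -twoSampleMean f x y := by
  simp only [twoSampleMean, Finset.expect_neg_distrib]

theorem abs_twoSampleMean_le [Nonempty ι] [Nonempty κ] {f : α → β → ℝ}
    {b : ℝ} (hfb : ∀ x y, |f x y| ≤ b) (x : ι → α) (y : κ → β) : |twoSampleMean f x y| ≤ b :=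
  (Finset.abs_expect_le _ _).trans <| Finset.expect_le Finset.univ_nonempty fun _ _ ↦
    (Finset.abs_expect_le _ _).trans <| Finset.expect_le Finset.univ_nonempty fun _ _ ↦ hfb _ _

theorem expect_expect_eq_expect_expect_add [AddGroup κ] (e : ι → κ) (a : ι → κ → ℝ) :
    𝔼 i, 𝔼 j, a i j = 𝔼 r, 𝔼 i, a i (e i + r) := by
  rw [Finset.expect_comm (f := fun r i ↦ a i (e i + r))]
  exact Finset.expect_congr rfl fun i _ ↦
    (Fintype.expect_equiv (Equiv.addLeft (e i)) _ _ fun _ ↦ rfl).symm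

variable [MeasurableSpace α] [MeasurableSpace β]

theorem measurePreserving_pi_comp_embedding (e : ι ↪ κ) (ν : Measure β) [IsProbabilityMeasure ν] :
    MeasurePreserving (fun (y : κ → β) i ↦ y (e i)) (Measure.pi fun _ ↦ ν)
      (Measure.pi fun _ ↦ ν) where
  measurable := by fun_prop
  map_eq := by
    have hindep : iIndepFun (fun i (y : κ → β) ↦ y (e i)) (Measure.pi fun _ ↦ ν) :=
      (iIndepFun_pi (X := fun _ : κ ↦ id) fun _ ↦ aemeasurable_id).precomp e.injective
    rw [hindep.map_fun_eq_pi_map fun i ↦ (measurable_pi_apply (e i)).aemeasurable]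
    congr with i : 1
    exact (measurePreserving_eval (fun _ : κ ↦ ν) (e i)).map_eq

variable (μ : Measure α) (ν : Measure β) [IsProbabilityMeasure μ] [IsProbabilityMeasure ν]

theorem measurePreserving_matching (e : ι ↪ κ) :
    MeasurePreserving (fun (ω : (ι → α) × (κ → β)) i ↦ (ω.1 i, ω.2 (e i)))
      ((Measure.pi fun _ ↦ μ).prod (Measure.pi fun _ ↦ ν)) (Measure.pi fun _ ↦ μ.prod ν) :=
  (measurePreserving_arrowProdEquivProdArrow α β ι _ _).symm.comp
    ((MeasurePreserving.id _).prod (measurePreserving_pi_comp_embedding e ν))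

theorem mgf_expect_matching (e : ι ↪ κ) {f : α → β → ℝ} (hf : Measurable (Function.uncurry f))
    (t : ℝ) :
    mgf (fun ω : (ι → α) × (κ → β) ↦ 𝔼 i, f (ω.1 i) (ω.2 (e i)))
        ((Measure.pi fun _ ↦ μ).prod (Measure.pi fun _ ↦ ν)) (Fintype.card ι * t) =
      mgf (Function.uncurry f) (μ.prod ν) t ^ Fintype.card ι := by
  have exp_eq_prod (z : ι → α × β) : exp (Fintype.card ι * t * 𝔼 i, Function.uncurry f (z i)) =
      ∏ i, exp (t * Function.uncurry f (z i)) := by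
    rw [← exp_sum, ← Finset.mul_sum, ← Fintype.card_mul_expect]
    ring_nf
  have hmeas : Measurable fun z : ι → α × β ↦ ∏ i, exp (t * Function.uncurry f (z i)) := by
    fun_prop
  simp only [mgf]
  rw [← integral_fintype_prod_eq_pow, ← (measurePreserving_matching μ ν e).map_eq,
    integral_map (measurePreserving_matching μ ν e).aemeasurable hmeas.aestronglyMeasurable]
  simp_rw [← exp_eq_prod, Function.uncurry_apply_pair]

variable {μ ν} {f : α → β → ℝ} {b : ℝ}

theorem measurable_twoSampleMean (hf : Measurable (Function.uncurry f)) :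
    Measurable fun ω : (ι → α) × (κ → β) ↦ twoSampleMean f ω.1 ω.2 := by
  simp only [twoSampleMean, Fintype.expect_eq_sum_div_card]
  fun_prop

theorem mgf_twoSampleMean_le_of_card_le [Nonempty ι] (hcard : Fintype.card ι ≤ Fintype.card κ)
    (hf : Measurable (Function.uncurry f)) (hfb : ∀ x y, |f x y| ≤ b) (t : ℝ) :
    mgf (fun ω : (ι → α) × (κ → β) ↦ twoSampleMean f ω.1 ω.2)
        ((Measure.pi fun _ ↦ μ).prod (Measure.pi fun _ ↦ ν)) (Fintype.card ι * t) ≤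
      mgf (Function.uncurry f) (μ.prod ν) t ^ Fintype.card ι := by
  obtain ⟨e⟩ := Function.Embedding.nonempty_of_card_le hcard
  have : Nonempty κ := ‹Nonempty ι›.map e
  let _ : AddGroup κ := (Fintype.equivFin κ).addGroup
  let shift (r : κ) : ι ↪ κ := e.trans (Equiv.addRight r).toEmbedding
  have hint (r : κ) : Integrable (fun ω : (ι → α) × (κ → β) ↦
      exp (Fintype.card ι * t * 𝔼 i, f (ω.1 i) (ω.2 (shift r i))))
      ((Measure.pi fun _ ↦ μ).prod (Measure.pi fun _ ↦ ν)) := by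
    refine integrable_exp_mul_of_mem_Icc (a := -b) (b := b) (Measurable.aemeasurable ?_)
      (.of_forall fun ω ↦ abs_le.1 ?_)
    · simp only [Fintype.expect_eq_sum_div_card]
      fun_prop
    · exact (Finset.abs_expect_le _ _).trans <|
        Finset.expect_le Finset.univ_nonempty fun _ _ ↦ hfb _ _
  simp only [twoSampleMean, expect_expect_eq_expect_expect_add e]
  refine (mgf_expect_le_expect_mgf hint).trans_eq ?_
  simp only [mgf_expect_matching μ ν _ hf, Fintype.expect_const]

theorem mgf_twoSampleMean_le [Nonempty ι] [Nonempty κ]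
    (hf : Measurable (Function.uncurry f)) (hfb : ∀ x y, |f x y| ≤ b) (t : ℝ) :
    mgf (fun ω : (ι → α) × (κ → β) ↦ twoSampleMean f ω.1 ω.2)
        ((Measure.pi fun _ ↦ μ).prod (Measure.pi fun _ ↦ ν))
        ((min (Fintype.card ι) (Fintype.card κ) : ℕ) * t) ≤
      mgf (Function.uncurry f) (μ.prod ν) t ^ min (Fintype.card ι) (Fintype.card κ) := by
  rcases le_total (Fintype.card ι) (Fintype.card κ) with hcard | hcard
  · rw [min_eq_left hcard]
    exact mgf_twoSampleMean_le_of_card_le hcard hf hfb t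
  · rw [min_eq_right hcard]
    rw [← mgf_comp_swap _ (Measure.pi fun _ ↦ μ), ← mgf_comp_swap (Function.uncurry f) μ]
    simpa only [Function.comp_def, Prod.fst_swap, Prod.snd_swap, twoSampleMean_swap] using!
      mgf_twoSampleMean_le_of_card_le (f := fun y x ↦ f x y) (μ := ν) (ν := μ) hcard
        (hf.comp measurable_swap) (fun y x ↦ hfb x y) t

theorem mgf_uncurry_le_of_variance_le (hf : Measurable (Function.uncurry f))
    (hfb : ∀ x y, |f x y| ≤ b) {v t : ℝ} (hvar : Var[Function.uncurry f; μ.prod ν] ≤ v)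
    (htb : |t| * (2 * b) ≤ 1) :
    mgf (Function.uncurry f) (μ.prod ν) t ≤
      exp (t * (∫ z, f z.1 z.2 ∂μ.prod ν) + t ^ 2 * v) := by
  have hmean : |∫ z, f z.1 z.2 ∂μ.prod ν| ≤ b := by
    simpa using norm_integral_le_of_norm_le_const (μ := μ.prod ν) (f := fun z ↦ f z.1 z.2)
      (.of_forall fun z ↦ hfb z.1 z.2)
  have hdev (z : α × β) : |f z.1 z.2 - ∫ z, f z.1 z.2 ∂μ.prod ν| ≤ 2 * b :=
    (abs_sub _ _).trans ((add_le_add (hfb _ _) hmean).trans_eq (two_mul b).symm)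
  refine (mgf_le_exp_mean_add_sq_mul_variance hf.aemeasurable (.of_forall hdev) htb).trans ?_
  exact exp_le_exp.2 (add_le_add_right (mul_le_mul_of_nonneg_left hvar (sq_nonneg t)) _)

theorem measureReal_add_le_twoSampleMean_le [Nonempty ι] [Nonempty κ]
    (hf : Measurable (Function.uncurry f)) (hfb : ∀ x y, |f x y| ≤ b) {v s k : ℝ} (hv : 0 < v)
    (hvar : Var[Function.uncurry f; μ.prod ν] ≤ v) (hs : 0 ≤ s) (hbs : b * s ≤ 3 * v)
    (hkι : k ≤ Fintype.card ι) (hkκ : k ≤ Fintype.card κ) :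
    ((Measure.pi fun _ ↦ μ).prod (Measure.pi fun _ ↦ ν)).real
        {ω : (ι → α) × (κ → β) | (∫ z, f z.1 z.2 ∂μ.prod ν) + s ≤ twoSampleMean f ω.1 ω.2} ≤
      exp (-(k * (s ^ 2 / (8 * v)))) := by
  set m := ∫ z, f z.1 z.2 ∂μ.prod ν
  set n := min (Fintype.card ι) (Fintype.card κ) with hn
  -- With `t = s / (6 * v)` the exponent is `n * s ^ 2 / v` times `1 / 6 - 1 / 36 = 5 / 36 ≥ 1 / 8`.
  set t := s / (6 * v) with ht
  have ht0 : 0 ≤ t := by positivity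
  have htb : |t| * (2 * b) ≤ 1 := by
    rw [abs_of_nonneg ht0, ht, div_mul_eq_mul_div, div_le_one (by positivity)]
    linarith
  have hkn : k ≤ n := by
    rw [hn, Nat.cast_min]
    exact le_min hkι hkκ
  calc _ ≤ exp (-(n * t) * (m + s)) * mgf (fun ω : (ι → α) × (κ → β) ↦ twoSampleMean f ω.1 ω.2)
        ((Measure.pi fun _ ↦ μ).prod (Measure.pi fun _ ↦ ν)) (n * t) :=
        measure_ge_le_exp_mul_mgf _ (by positivity) <| integrable_exp_mul_of_mem_Icc
          (measurable_twoSampleMean hf).aemeasurable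
          (.of_forall fun ω ↦ abs_le.1 (abs_twoSampleMean_le hfb _ _))
    _ ≤ exp (-(n * t) * (m + s)) * exp (t * m + t ^ 2 * v) ^ n := by
        gcongr
        exact (mgf_twoSampleMean_le hf hfb t).trans (pow_le_pow_left₀ mgf_nonneg
          (mgf_uncurry_le_of_variance_le hf hfb hvar htb) n)
    _ = exp (-(n * (5 * s ^ 2 / (36 * v)))) := by
        rw [← exp_nat_mul, ← exp_add, ht]
        congr 1
        field_simp
        ring
    _ ≤ exp (-(k * (s ^ 2 / (8 * v)))) := by
        have : s ^ 2 / (8 * v) ≤ 5 * s ^ 2 / (36 * v) := by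
          rw [div_le_div_iff₀ (by positivity) (by positivity)]
          nlinarith [mul_nonneg (sq_nonneg s) hv.le]
        gcongr

theorem variance_uncurry_le_integral_integral_sq (hf : Measurable (Function.uncurry f))
    (hfb : ∀ x y, |f x y| ≤ b) :
    Var[Function.uncurry f; μ.prod ν] ≤ ∫ x, ∫ y, f x y ^ 2 ∂ν ∂μ := by
  have hint : Integrable (fun z : α × β ↦ f z.1 z.2 ^ 2) (μ.prod ν) :=
    (MemLp.of_bound hf.aestronglyMeasurable b (.of_forall fun z ↦ hfb z.1 z.2)).integrable_sq
  rw [← integral_prod (fun z : α × β ↦ f z.1 z.2 ^ 2) hint]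
  exact variance_le_expectation_sq hf.aestronglyMeasurable

theorem measureReal_add_mul_sqrt_le_twoSampleMean_le {Ω : Type*} [MeasurableSpace Ω]
    {P : Measure Ω} {X : Ω → ι → α} {Y : Ω → κ → β} {lam v k : ℝ}
    (hXY : MeasurePreserving (fun ω ↦ (X ω, Y ω)) P
      ((Measure.pi fun _ ↦ μ).prod (Measure.pi fun _ ↦ ν)))
    (hf : Measurable (Function.uncurry f)) (hfb : ∀ x y, |f x y| ≤ b) (hv : 0 < v)
    (hvar : Var[Function.uncurry f; μ.prod ν] ≤ v) (hk : 0 < k) (hkι : k ≤ Fintype.card ι)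
    (hkκ : k ≤ Fintype.card κ) (hlam : 0 ≤ lam) (hblam : b * lam ≤ 3 * √(k * v)) :
    P.real {ω | (∫ z, f z.1 z.2 ∂μ.prod ν) + lam * √(v / k) ≤ twoSampleMean f (X ω) (Y ω)} ≤
      exp (-lam ^ 2 / 8) := by
  have : Nonempty ι := Fintype.card_pos_iff.1 (Nat.cast_pos.1 (hk.trans_le hkι))
  have : Nonempty κ := Fintype.card_pos_iff.1 (Nat.cast_pos.1 (hk.trans_le hkκ))
  have hbs : b * (lam * √(v / k)) ≤ 3 * v :=
    calc b * (lam * √(v / k)) = b * lam * √(v / k) := (mul_assoc _ _ _).symm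
      _ ≤ 3 * √(k * v) * √(v / k) := by gcongr
      _ = 3 * v := by rw [mul_assoc, sqrt_mul_mul_sqrt_div hk hv.le]
  have exponent_eq : -(k * ((lam * √(v / k)) ^ 2 / (8 * v))) = -lam ^ 2 / 8 := by
    rw [mul_pow, sq_sqrt (by positivity)]
    field_simp
  calc P.real {ω | (∫ z, f z.1 z.2 ∂μ.prod ν) + lam * √(v / k) ≤ twoSampleMean f (X ω) (Y ω)}
      = ((Measure.pi fun _ ↦ μ).prod (Measure.pi fun _ ↦ ν)).real {ω : (ι → α) × (κ → β) |
          (∫ z, f z.1 z.2 ∂μ.prod ν) + lam * √(v / k) ≤ twoSampleMean f ω.1 ω.2} :=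
        hXY.measureReal_preimage
          (measurableSet_le measurable_const (measurable_twoSampleMean hf)).nullMeasurableSet
    _ ≤ exp (-lam ^ 2 / 8) := exponent_eq ▸
        measureReal_add_le_twoSampleMean_le hf hfb hv hvar (by positivity) hbs hkι hkκ

theorem measureReal_twoSampleMean_le_sub_mul_sqrt_le {Ω : Type*} [MeasurableSpace Ω]
    {P : Measure Ω} {X : Ω → ι → α} {Y : Ω → κ → β} {lam v k : ℝ}
    (hXY : MeasurePreserving (fun ω ↦ (X ω, Y ω)) P
      ((Measure.pi fun _ ↦ μ).prod (Measure.pi fun _ ↦ ν)))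
    (hf : Measurable (Function.uncurry f)) (hfb : ∀ x y, |f x y| ≤ b) (hv : 0 < v)
    (hvar : Var[Function.uncurry f; μ.prod ν] ≤ v) (hk : 0 < k) (hkι : k ≤ Fintype.card ι)
    (hkκ : k ≤ Fintype.card κ) (hlam : 0 ≤ lam) (hblam : b * lam ≤ 3 * √(k * v)) :
    P.real {ω | twoSampleMean f (X ω) (Y ω) ≤ (∫ z, f z.1 z.2 ∂μ.prod ν) - lam * √(v / k)} ≤
      exp (-lam ^ 2 / 8) := by
  have hvar_neg : Var[Function.uncurry fun a b ↦ -f a b; μ.prod ν] ≤ v :=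
    variance_fun_neg.trans_le hvar
  have hf_neg : Measurable (Function.uncurry fun a b ↦ -f a b) := hf.neg
  convert measureReal_add_mul_sqrt_le_twoSampleMean_le hXY hf_neg
    (fun x y ↦ (abs_neg (f x y)).trans_le (hfb x y)) hv hvar_neg hk hkι hkκ hlam hblam using 4
  simp only [integral_neg, twoSampleMean_neg]
  constructor <;> intro h <;> linarith

end TwoSampleMean

theorem one_sub_ofReal_le_measure_of_compl_subset {Ω : Type*} [MeasurableSpace Ω]
    {P : Measure Ω} [IsProbabilityMeasure P] {G B : Set Ω} {δ : ℝ} (hG : Gᶜ ⊆ B)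
    (hB : P.real B ≤ δ) : 1 - ENNReal.ofReal δ ≤ P G := by
  rw [tsub_le_iff_right]
  calc 1 = P (G ∪ Gᶜ) := by rw [Set.union_compl_self, measure_univ]
    _ ≤ P G + P Gᶜ := measure_union_le _ _
    _ ≤ P G + ENNReal.ofReal δ := by
      gcongr
      rw [← ofReal_measureReal]
      exact ENNReal.ofReal_le_ofReal ((measureReal_mono hG).trans hB)

theorem one_sub_ofReal_le_measure_sub_sub_add_le {Ω : Type*} [MeasurableSpace Ω] {P : Measure Ω}
    [IsProbabilityMeasure P] {A B C D : Ω → ℝ} {a b c d s δ : ℝ}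
    (hA : P.real {ω | a + s ≤ A ω} ≤ δ) (hB : P.real {ω | B ω ≤ b - s} ≤ δ)
    (hC : P.real {ω | C ω ≤ c - s} ≤ δ) (hD : P.real {ω | d + s ≤ D ω} ≤ δ) :
    1 - ENNReal.ofReal (4 * δ) ≤ P {ω | A ω - B ω - C ω + D ω ≤ a - b - c + d + 4 * s} := by
  refine one_sub_ofReal_le_measure_of_compl_subset
    (B := ({ω | a + s ≤ A ω} ∪ {ω | B ω ≤ b - s}) ∪ ({ω | C ω ≤ c - s} ∪ {ω | d + s ≤ D ω})) ?_ ?_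
  · refine Set.compl_subset_comm.1 fun ω hω ↦ ?_
    simp only [Set.mem_compl_iff, Set.mem_union, Set.mem_ofPred_eq, not_or, not_le] at hω ⊢
    linarith
  · have hAB := measureReal_union_le (μ := P) {ω | a + s ≤ A ω} {ω | B ω ≤ b - s}
    have hCD := measureReal_union_le (μ := P) {ω | C ω ≤ c - s} {ω | d + s ≤ D ω}
    refine (measureReal_union_le _ _).trans ?_
    linarith

section AsymMMD

variable {α : Type*} {K : α → α → ℝ}

theorem asymMMD_eq_twoSampleMean {m n m' n' : ℕ} (dtr : (Fin m → α) × (Fin n → α))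
    (dte : (Fin m' → α) × (Fin n' → α)) :
    asymMMD K m n m' n' dtr dte =
      twoSampleMean K dte.1 dtr.1 - twoSampleMean K dte.1 dtr.2 -
        twoSampleMean K dte.2 dtr.1 + twoSampleMean K dte.2 dtr.2 := by
  simp only [asymMMD, twoSampleMean, Fintype.expect_eq_sum_div_card, Fintype.card_fin,
    ← Finset.sum_div, div_div, one_div_mul_eq_div, mul_comm]

variable [MeasurableSpace α]

/-- The population squared maximum mean discrepancy of `p` and `q` for the kernel `K`, which
`asymMMD` estimates without bias. The two cross terms are kept apart, since `K` need not be
symmetric. -/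
noncomputable def mmdSq (K : α → α → ℝ) (p q : Measure α) : ℝ :=
  (∫ z, K z.1 z.2 ∂p.prod p) - (∫ z, K z.1 z.2 ∂p.prod q) -
    (∫ z, K z.1 z.2 ∂q.prod p) + ∫ z, K z.1 z.2 ∂q.prod q

theorem mmdSq_self (p : Measure α) : mmdSq K p p = 0 := by
  simp [mmdSq]

theorem asym_mmd_concentration_H0_general (hK : Measurable (Function.uncurry K))
    (hKb : ∀ x y, |K x y| ≤ 1) (p q : Measure α) [IsProbabilityMeasure p] [IsProbabilityMeasure q]
    {v : ℝ} (hpp : ∫ x, ∫ y, K x y ^ 2 ∂p ∂p ≤ v) (hpq : ∫ x, ∫ y, K x y ^ 2 ∂q ∂p ≤ v)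
    (hqp : ∫ x, ∫ y, K x y ^ 2 ∂p ∂q ≤ v) (hqq : ∫ x, ∫ y, K x y ^ 2 ∂q ∂q ≤ v)
    {m n m' n' : ℕ} {k : ℝ} (hm : k ≤ m) (hn : k ≤ n) (hm' : k ≤ m') (hn' : k ≤ n')
    {lam : ℝ} (hlam : 0 < lam) (hlam' : lam ≤ 3 * √(k * v)) :
    1 - ENNReal.ofReal (4 * exp (-lam ^ 2 / 8)) ≤
      (((Measure.pi fun _ : Fin m ↦ p).prod (Measure.pi fun _ : Fin n ↦ q)).prod
        ((Measure.pi fun _ : Fin m' ↦ p).prod (Measure.pi fun _ : Fin n' ↦ q)))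
        {ω | asymMMD K m n m' n' ω.1 ω.2 ≤ mmdSq K p q + 4 * lam * √(v / k)} := by
  have hkv : 0 < k * v := sqrt_pos.1 (by linarith)
  have hv0 : 0 ≤ v := (integral_nonneg fun _ ↦ integral_nonneg fun _ ↦ sq_nonneg _).trans hpp
  have hv : 0 < v := hv0.lt_of_ne' (right_ne_zero_of_mul hkv.ne')
  have hk : 0 < k := pos_of_mul_pos_left hkv hv0
  have hlam1 : 1 * lam ≤ 3 * √(k * v) := (one_mul lam).trans_le hlam'
  have hvar (μ ν : Measure α) [IsProbabilityMeasure μ] [IsProbabilityMeasure ν] :=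
    variance_uncurry_le_integral_integral_sq (μ := μ) (ν := ν) hK hKb
  rw [← Fintype.card_fin m] at hm
  rw [← Fintype.card_fin n] at hn
  rw [← Fintype.card_fin m'] at hm'
  rw [← Fintype.card_fin n'] at hn'
  simp only [asymMMD_eq_twoSampleMean, mmdSq, mul_assoc]
  exact one_sub_ofReal_le_measure_sub_sub_add_le
    (measureReal_add_mul_sqrt_le_twoSampleMean_le
      (Measure.measurePreserving_swap.comp (measurePreserving_fst.prod measurePreserving_fst))
      hK hKb hv ((hvar p p).trans hpp) hk hm' hm hlam.le hlam1)
    (measureReal_twoSampleMean_le_sub_mul_sqrt_le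
      (Measure.measurePreserving_swap.comp (measurePreserving_snd.prod measurePreserving_fst))
      hK hKb hv ((hvar p q).trans hpq) hk hm' hn hlam.le hlam1)
    (measureReal_twoSampleMean_le_sub_mul_sqrt_le
      (Measure.measurePreserving_swap.comp (measurePreserving_fst.prod measurePreserving_snd))
      hK hKb hv ((hvar q p).trans hqp) hk hn' hm hlam.le hlam1)
    (measureReal_add_mul_sqrt_le_twoSampleMean_le
      (Measure.measurePreserving_swap.comp (measurePreserving_snd.prod measurePreserving_snd))
      hK hKb hv ((hvar q q).trans hqq) hk hn' hn hlam.le hlam1)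

end AsymMMD

/-- Proposition B.4, part 1: under `H₀ : p = q`, for `0 < λ < 3√(c_aνn)`, with
probability at least `1 − 4e^{−λ²/8}` under the joint product law of the four samples,
`T̂_a ≤ 4λ√(ν/(c_a n))`. -/
theorem asym_mmd_concentration_H0
    {d : ℕ} (𝒳 : Set (EuclideanSpace ℝ (Fin d))) (h𝒳 : MeasurableSet 𝒳)
    (K : 𝒳 → 𝒳 → ℝ)
    (hKmeas : Measurable (Function.uncurry K))
    (hKsym : ∀ x y, K x y = K y x)
    (hKpsd : ∀ (m : ℕ) (z : Fin m → 𝒳) (a : Fin m → ℝ),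
      0 ≤ ∑ i, ∑ j, a i * a j * K (z i) (z j))
    (hKbdd : ∀ x y, |K x y| ≤ 1)
    (p q : Measure 𝒳) [IsProbabilityMeasure p] [IsProbabilityMeasure q]
    (ν : ℝ) (hν1 : ν ≤ 1)
    (hνpp : ∫ x, ∫ y, (K x y)^2 ∂p ∂p ≤ ν)
    (hνpq : ∫ x, ∫ y, (K x y)^2 ∂q ∂p ≤ ν)
    (hνqq : ∫ x, ∫ y, (K x y)^2 ∂q ∂q ≤ ν)
    (n1X n1Y n2X n2Y : ℕ) (ca : ℝ) (hca : 0 < ca) (hca1 : ca < 1)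
    (hbal1 : ca * ((n1X + n1Y + n2X + n2Y : ℕ) : ℝ) ≤ (n1X : ℝ))
    (hbal2 : ca * ((n1X + n1Y + n2X + n2Y : ℕ) : ℝ) ≤ (n1Y : ℝ))
    (hbal3 : ca * ((n1X + n1Y + n2X + n2Y : ℕ) : ℝ) ≤ (n2X : ℝ))
    (hbal4 : ca * ((n1X + n1Y + n2X + n2Y : ℕ) : ℝ) ≤ (n2Y : ℝ))
    (hH0 : p = q)
    (lam : ℝ) (hlam : 0 < lam)
    (hlam' : lam < 3 * Real.sqrt (ca * ν * ((n1X + n1Y + n2X + n2Y : ℕ) : ℝ))) :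
    1 - ENNReal.ofReal (4 * Real.exp (-lam^2 / 8)) ≤
      (((Measure.pi fun _ : Fin n1X => p).prod (Measure.pi fun _ : Fin n1Y => q)).prod
        ((Measure.pi fun _ : Fin n2X => p).prod (Measure.pi fun _ : Fin n2Y => q)))
        {ω : ((Fin n1X → 𝒳) × (Fin n1Y → 𝒳)) × ((Fin n2X → 𝒳) × (Fin n2Y → 𝒳)) |
          asymMMD K n1X n1Y n2X n2Y ω.1 ω.2 ≤
            4 * lam * Real.sqrt (ν/(ca * ((n1X + n1Y + n2X + n2Y : ℕ) : ℝ)))} := by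
  subst hH0
  simpa only [mmdSq_self, zero_add] using asym_mmd_concentration_H0_general hKmeas hKbdd p p
    hνpp hνpp hνpp hνpp hbal1 hbal2 hbal3 hbal4 hlam (mul_right_comm ca ν _ ▸ hlam'.le)
end
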